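/- Graph isomorphism is reducible to chordal graph isomorphism: for a graph G, let T(G) be the graph obtained from the subdivision of G by adding all edges between the original vertices of G. Then T(G) is chordal, and two graphs G and H are isomorphic if and only if T(G) and T(H) are isomorphic. -/

import Mathlib

/-! Original vertices form a clique of `TGraph G` and edge vertices form an independent set, so
`TGraph G` is a split graph. On a cycle of length at least 4, two original vertices that are not
consecutive on the cycle therefore give a chord, and such a pair exists because edge vertices are
never consecutive.

To recover `G` from `TGraph G`, call a vertex simplicial if its neighbours are pairwise adjacent.
Every edge vertex is simplicial, while an original vertex (of a graph without isolated vertices)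
is simplicial only if `TGraph G` is complete (`TGraph_complete_of_simplicial`). In the complete
case `G` has to be the single edge `K₂`. Otherwise an isomorphism `TGraph G ≃g TGraph H` maps
original vertices to original vertices and edge vertices to edge vertices, and `G`-adjacency is
the existence of an edge vertex adjacent to both endpoints. -/

/-- A graph is chordal if every cycle of length at least 4 has a chord. -/
def SimpleGraph.IsChordal {V : Type*} (G : SimpleGraph V) : Prop :=
  ∀ ⦃v : V⦄ (w : G.Walk v v), w.IsCycle → 4 ≤ w.length →
    ∃ x y, x ∈ w.support ∧ y ∈ w.support ∧ G.Adj x y ∧ ¬ w.toSubgraph.Adj x y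

/-- `TGraph G`: the subdivision of `G` (each edge `uv` replaced by a path through a
new vertex indexed by that edge) with all edges added between original vertices. -/
def TGraph {V : Type*} (G : SimpleGraph V) : SimpleGraph (V ⊕ G.edgeSet) :=
  SimpleGraph.fromRel fun a b =>
    match a, b with
    | Sum.inl u, Sum.inl v => u ≠ v
    | Sum.inl u, Sum.inr e => u ∈ (e : Sym2 V)
    | Sum.inr e, Sum.inl u => u ∈ (e : Sym2 V)
    | Sum.inr _, Sum.inr _ => False

section TGraphAux

variable {V W : Type*} {G : SimpleGraph V} {H : SimpleGraph W}

@[simp] lemma TGraph_inl_inl (u v : V) :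
    (TGraph G).Adj (Sum.inl u) (Sum.inl v) ↔ u ≠ v := by
  simp only [TGraph, SimpleGraph.fromRel_adj, ne_eq, Sum.inl.injEq]
  grind

@[simp] lemma TGraph_inl_inr (u : V) (e : G.edgeSet) :
    (TGraph G).Adj (Sum.inl u) (Sum.inr e) ↔ u ∈ (e : Sym2 V) := by
  simp [TGraph, SimpleGraph.fromRel_adj]

@[simp] lemma TGraph_inr_inl (u : V) (e : G.edgeSet) :
    (TGraph G).Adj (Sum.inr e) (Sum.inl u) ↔ u ∈ (e : Sym2 V) := by
  simp [TGraph, SimpleGraph.fromRel_adj]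

@[simp] lemma TGraph_inr_inr (e f : G.edgeSet) :
    ¬ (TGraph G).Adj (Sum.inr e) (Sum.inr f) := by
  simp [TGraph, SimpleGraph.fromRel_adj]

lemma TGraph_adj_of_isLeft {x y : V ⊕ G.edgeSet} (hx : x.isLeft) (hy : y.isLeft) (h : x ≠ y) :
    (TGraph G).Adj x y := by
  cases x <;> cases y <;> simp_all

lemma TGraph_isLeft_of_adj {x y : V ⊕ G.edgeSet} (hx : ¬ x.isLeft) (h : (TGraph G).Adj x y) :
    y.isLeft := by
  cases x <;> cases y <;> simp_all

lemma TGraph_isChordal (G : SimpleGraph V) : (TGraph G).IsChordal := by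
  intro v w hw hn
  have inj : ∀ i j, 1 ≤ i → i ≤ w.length → 1 ≤ j → j ≤ w.length →
      w.getVert i = w.getVert j → i = j := fun i j h1 h2 h3 h4 h ↦
    hw.getVert_injOn ⟨h1, h2⟩ ⟨h3, h4⟩ h
  -- Original vertices at two cycle positions that differ by neither `0` nor `±1` modulo the
  -- length span a chord.
  have key : ∀ i j, 1 ≤ i → i < w.length → 1 ≤ j → j ≤ w.length → i ≠ j → i + 1 ≠ j →
      j + 1 ≠ i → ¬ (i = 1 ∧ j = w.length) → (w.getVert i).isLeft → (w.getVert j).isLeft →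
      ∃ x y, x ∈ w.support ∧ y ∈ w.support ∧ (TGraph G).Adj x y ∧ ¬ w.toSubgraph.Adj x y := by
    intro i j hi hi' hj hj' hij h1 h2 h3 hli hlj
    refine ⟨_, _, w.getVert_mem_support i, w.getVert_mem_support j,
      TGraph_adj_of_isLeft hli hlj fun h ↦ hij (inj i j hi hi'.le hj hj' h), fun h ↦ ?_⟩
    have hmem : w.getVert j ∈ w.toSubgraph.neighborSet (w.getVert i) := h
    rw [hw.neighborSet_toSubgraph_internal (by omega) hi'] at hmem
    rcases hmem with hm | hm
    · rcases Nat.eq_or_lt_of_le hi with rfl | hi2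
      · simp only [Nat.sub_self, SimpleGraph.Walk.getVert_zero] at hm
        exact h3 ⟨rfl, inj _ _ hj hj' (by omega) le_rfl (hm.trans w.getVert_length.symm)⟩
      · have := inj _ _ hj hj' (by omega) (by omega) hm
        omega
    · have := inj _ _ hj hj' (by omega) (by omega) hm
      omega
  have adj : ∀ i, i < w.length → (TGraph G).Adj (w.getVert i) (w.getVert (i + 1)) :=
    fun i hi ↦ w.adj_getVert_succ hi
  by_cases h2 : (w.getVert 2).isLeft
  -- The base vertex is read at position `w.length`: `getVert` is injective on `1, …, w.length`.
  · by_cases h0 : (w.getVert w.length).isLeft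
    · exact key 2 w.length (by omega) (by omega) (by omega) le_rfl (by omega) (by omega)
        (by omega) (by omega) h2 h0
    · have hp := adj (w.length - 1) (by omega)
      rw [Nat.sub_add_cancel (by omega)] at hp
      have hs := adj 0 (by omega)
      rw [w.getVert_zero] at hs
      rw [w.getVert_length] at h0 hp
      exact key 1 (w.length - 1) (by omega) (by omega) (by omega) (by omega) (by omega) (by omega)
        (by omega) (by omega) (TGraph_isLeft_of_adj h0 hs) (TGraph_isLeft_of_adj h0 hp.symm)
  · exact key 1 3 (by omega) (by omega) (by omega) (by omega) (by omega) (by omega) (by omega)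
      (by omega) (TGraph_isLeft_of_adj h2 (adj 1 (by omega)).symm)
      (TGraph_isLeft_of_adj h2 (adj 2 (by omega)))

lemma TGraph_inr_simplicial (e : G.edgeSet) {x y : V ⊕ G.edgeSet}
    (hx : (TGraph G).Adj (Sum.inr e) x) (hy : (TGraph G).Adj (Sum.inr e) y) (h : x ≠ y) :
    (TGraph G).Adj x y :=
  TGraph_adj_of_isLeft (TGraph_isLeft_of_adj (by simp) hx) (TGraph_isLeft_of_adj (by simp) hy) h

/-- If the neighbours of the non-isolated original vertex `v` are pairwise adjacent, then every
vertex lies on a given edge at `v`, so `G` has just two vertices and one edge. -/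
lemma TGraph_complete_of_simplicial {v : V} (hv : ∃ u, G.Adj v u)
    (h : ∀ x y, (TGraph G).Adj (Sum.inl v) x → (TGraph G).Adj (Sum.inl v) y → x ≠ y →
      (TGraph G).Adj x y) : TGraph G = ⊤ := by
  obtain ⟨u, hu⟩ := hv
  have all : ∀ w, w = v ∨ w = u := by
    intro w
    by_cases hw : w = v
    · exact .inl hw
    · have := h (Sum.inl w) (Sum.inr ⟨s(v, u), hu⟩) (by simpa using Ne.symm hw) (by simp) (by simp)
      simpa using this
  have edge : ∀ e ∈ G.edgeSet, e = s(v, u) := by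
    intro e he
    induction e with
    | _ a b =>
      have hab : a ≠ b := G.ne_of_adj he
      rcases all a with rfl | rfl <;> rcases all b with rfl | rfl <;> simp_all [Sym2.eq_swap]
  ext x y
  rw [SimpleGraph.top_adj]
  refine ⟨SimpleGraph.Adj.ne, fun hxy ↦ ?_⟩
  rcases x with x | ⟨e, he⟩ <;> rcases y with y | ⟨f, hf⟩
  · simpa using hxy
  · simpa [edge f hf] using all x
  · simpa [edge e he] using all y
  · exact absurd (by simp [edge e he, edge f hf]) hxy

lemma eq_top_and_card_of_TGraph_eq_top [Nonempty V] (hG : ∀ v : V, ∃ u, G.Adj v u)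
    (h : TGraph G = ⊤) : G = ⊤ ∧ Nat.card V = 2 := by
  have mem : ∀ (e : G.edgeSet) (w : V), w ∈ (e : Sym2 V) := fun e w ↦ by
    rw [← TGraph_inl_inr, h]; simp
  constructor
  · ext a b
    rw [SimpleGraph.top_adj]
    refine ⟨SimpleGraph.Adj.ne, fun hab ↦ ?_⟩
    obtain ⟨u, hu⟩ := hG a
    have := mem ⟨s(a, u), hu⟩ b
    rcases Sym2.mem_iff.1 this with rfl | rfl
    · exact absurd rfl hab
    · exact hu
  · obtain ⟨v⟩ := ‹Nonempty V›
    obtain ⟨u, hu⟩ := hG v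
    rw [Nat.card_eq_two_iff]
    refine ⟨v, u, hu.ne, Set.eq_univ_of_forall fun w ↦ ?_⟩
    simpa using mem ⟨s(v, u), hu⟩ w

lemma TGraph_eq_top_of_iso (φ : TGraph G ≃g TGraph H) (h : TGraph G = ⊤) : TGraph H = ⊤ := by
  ext x y
  have hadj : (TGraph G).Adj (φ.symm x) (φ.symm y) ↔ φ.symm x ≠ φ.symm y :=
    iff_of_eq (congrArg (fun K ↦ K.Adj (φ.symm x) (φ.symm y)) h)
  rw [← φ.symm.map_adj_iff, hadj]
  simp

lemma TGraph_iso_inl (hG : ∀ v : V, ∃ u, G.Adj v u) (φ : TGraph G ≃g TGraph H)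
    (h : TGraph G ≠ ⊤) (v : V) : ∃ w, φ (Sum.inl v) = Sum.inl w := by
  rcases he : φ (Sum.inl v) with w | e
  · exact ⟨w, rfl⟩
  · refine absurd (TGraph_complete_of_simplicial (hG v) fun x y hx hy hxy ↦ ?_) h
    rw [← φ.map_adj_iff] at hx hy ⊢
    rw [he] at hx hy
    exact TGraph_inr_simplicial e hx hy (φ.injective.ne hxy)

/-- Adjacency in `G` is the existence of a common edge vertex. An isomorphism of `TGraph`s that
sends original vertices to original vertices in both directions also sends edge vertices to edge
vertices, so it preserves this. -/
lemma adj_of_TGraph_iso (φ : TGraph G ≃g TGraph H) {f : V → W}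
    (hf : ∀ v, φ (Sum.inl v) = Sum.inl (f v))
    (hinv : ∀ w, ∃ v, φ.symm (Sum.inl w) = Sum.inl v) {a b : V} (hab : G.Adj a b) :
    H.Adj (f a) (f b) := by
  have hne : f a ≠ f b := fun h ↦ hab.ne <| by
    have : φ (Sum.inl a) = φ (Sum.inl b) := by rw [hf, hf, h]
    simpa using this
  rcases he : φ (Sum.inr ⟨s(a, b), hab⟩) with w | ⟨e, hE⟩
  · obtain ⟨v, hv⟩ := hinv w
    rw [← he, φ.symm_apply_apply] at hv
    cases hv
  · have h1 : (TGraph G).Adj (Sum.inl a) (Sum.inr ⟨s(a, b), hab⟩) := by simp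
    have h2 : (TGraph G).Adj (Sum.inl b) (Sum.inr ⟨s(a, b), hab⟩) := by simp
    rw [← φ.map_adj_iff, hf, he, TGraph_inl_inr] at h1 h2
    have : e = s(f a, f b) := (Sym2.mem_and_mem_iff hne).1 ⟨h1, h2⟩
    exact H.mem_edgeSet.1 (this ▸ hE)

lemma TGraph_nonempty_iso_of_iso (φ : G ≃g H) : Nonempty (TGraph G ≃g TGraph H) := by
  refine ⟨⟨Equiv.sumCongr φ.toEquiv φ.mapEdgeSet, ?_⟩⟩
  rintro (x | e) (y | f) <;> simp

lemma nonempty_iso_of_TGraph_iso (hG : ∀ v : V, ∃ u, G.Adj v u) (hH : ∀ w : W, ∃ u, H.Adj w u)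
    (φ : TGraph G ≃g TGraph H) : Nonempty (G ≃g H) := by
  -- For empty `V` the graph `TGraph G` is complete too, but no original vertex can be sent to an
  -- edge vertex, so the second case covers it.
  by_cases h : TGraph G = ⊤ ∧ Nonempty V
  · obtain ⟨h, hV⟩ := h
    have hW : Nonempty W := by
      obtain ⟨v⟩ := hV
      rcases φ (Sum.inl v) with w | ⟨e, he⟩
      · exact ⟨w⟩
      · exact ⟨e.out.1⟩
    obtain ⟨rfl, cV⟩ := eq_top_and_card_of_TGraph_eq_top hG h
    obtain ⟨rfl, cW⟩ := eq_top_and_card_of_TGraph_eq_top hH (TGraph_eq_top_of_iso φ h)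
    have : Finite V := Nat.finite_of_card_ne_zero (by omega)
    have : Finite W := Nat.finite_of_card_ne_zero (by omega)
    exact ⟨SimpleGraph.Iso.completeGraph 
      ((Finite.equivFinOfCardEq cV).trans (Finite.equivFinOfCardEq cW).symm)⟩
  · have hl : ∀ v, ∃ w, φ (Sum.inl v) = Sum.inl w := fun v ↦
      TGraph_iso_inl hG φ (fun h' ↦ h ⟨h', ⟨v⟩⟩) v
    have hr : ∀ w, ∃ v, φ.symm (Sum.inl w) = Sum.inl v := fun w ↦ by
      refine TGraph_iso_inl hH φ.symm (fun h' ↦ h ⟨TGraph_eq_top_of_iso φ.symm h', ?_⟩) w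
      rcases φ.symm (Sum.inl w) with v | ⟨e, he⟩
      · exact ⟨v⟩
      · exact ⟨e.out.1⟩
    choose f hf using id hl
    choose g hg using id hr
    have gf : ∀ v, g (f v) = v := fun v ↦ by
      have := hg (f v)
      rw [← hf, φ.symm_apply_apply] at this
      exact (Sum.inl.inj this).symm
    have fg : ∀ w, f (g w) = w := fun w ↦ by
      have := hf (g w)
      rw [← hg, φ.apply_symm_apply] at this
      exact (Sum.inl.inj this).symm
    refine ⟨⟨⟨f, g, gf, fg⟩, fun {a b} ↦ ⟨fun hab ↦ ?_, adj_of_TGraph_iso φ hf hr⟩⟩⟩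
    have := adj_of_TGraph_iso φ.symm hg hl hab
    simpa [gf] using this

end TGraphAux

/-- Graph isomorphism reduces to chordal graph isomorphism: `T(G)` is chordal and,
for graphs without isolated vertices, `G ≅ H` iff `T(G) ≅ T(H)`. -/
theorem tGraph_reduction {V W : Type*} (G : SimpleGraph V) (H : SimpleGraph W)
    (hG : ∀ v : V, ∃ u, G.Adj v u) (hH : ∀ w : W, ∃ u, H.Adj w u) :
    (TGraph G).IsChordal ∧
      (Nonempty (G ≃g H) ↔ Nonempty (TGraph G ≃g TGraph H)) :=
  ⟨TGraph_isChordal G, fun ⟨φ⟩ ↦ TGraph_nonempty_iso_of_iso φ,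
    fun ⟨φ⟩ ↦ nonempty_iso_of_TGraph_iso hG hH φ⟩
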